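/- arXiv:math/0702196 — 4 statements merged into one kernel-verified Lean document; each statement's English description precedes it below -/
import Mathlib

section
/- Let u : ℝ × ℝⁿ → ℝⁿ be a C¹ time-dependent vector field satisfying the inviscid Burgers equation ∂ₜu(t,x) + (Dₓu(t,x))(u(t,x)) = 0 for all (t,x), and let γ : [0,T] → ℝⁿ be differentiable with γ'(t) = u(t, γ(t)) for all t ∈ [0,T]. Then γ(t) = γ(0) + t·u(0, γ(0)) for all t ∈ [0,T]; that is, each particle moves with constant velocity along a straight line. -/
/-- flat-space content of Proposition 1: along a smooth solution of the
inviscid Burgers equation each particle moves with constant velocity along a straight line. -/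
theorem burgers_particles_move_with_constant_velocity
    (n : ℕ) (T : ℝ) (hT : 0 ≤ T)
    (u : ℝ × EuclideanSpace ℝ (Fin n) → EuclideanSpace ℝ (Fin n))
    (hu : ContDiff ℝ 1 u)
    (hburgers : ∀ (t : ℝ) (x : EuclideanSpace ℝ (Fin n)),
      deriv (fun s => u (s, x)) t + (fderiv ℝ (fun y => u (t, y)) x) (u (t, x)) = 0)
    (γ : ℝ → EuclideanSpace ℝ (Fin n))
    (hγ : ∀ t ∈ Set.Icc (0 : ℝ) T, HasDerivAt γ (u (t, γ t)) t) :
    ∀ t ∈ Set.Icc (0 : ℝ) T, γ t = γ 0 + t • u (0, γ 0) := by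
  have hw : ∀ t ∈ Set.Icc (0 : ℝ) T, HasDerivAt (fun s => u (s, γ s)) 0 t := by
    intro t ht
    have hd : HasFDerivAt u (fderiv ℝ u (t, γ t)) (t, γ t) :=
      (hu.differentiable one_ne_zero (t, γ t)).hasFDerivAt
    have h1 : HasDerivAt (fun s => u (s, γ t)) (fderiv ℝ u (t, γ t) (1, 0)) t :=
      HasFDerivAt.comp_hasDerivAt (f := fun s : ℝ => (s, γ t)) t hd
        ((hasDerivAt_id t).prodMk (hasDerivAt_const t (γ t)))
    have h2 : HasFDerivAt (fun y => u (t, y))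
        ((fderiv ℝ u (t, γ t)).comp
          (ContinuousLinearMap.inr ℝ ℝ (EuclideanSpace ℝ (Fin n)))) (γ t) :=
      HasFDerivAt.comp (f := fun y => (t, y)) (γ t) hd (hasFDerivAt_prodMk_right t (γ t))
    have h3 : HasDerivAt (fun s => u (s, γ s)) (fderiv ℝ u (t, γ t) (1, u (t, γ t))) t :=
      HasFDerivAt.comp_hasDerivAt (f := fun s : ℝ => (s, γ s)) t hd
        ((hasDerivAt_id t).prodMk (hγ t ht))
    have hb := hburgers t (γ t)
    rw [h1.deriv, h2.fderiv, ContinuousLinearMap.comp_apply, ContinuousLinearMap.inr_apply,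
      ← map_add] at hb
    simp only [Prod.mk_add_mk, add_zero, zero_add] at hb
    rwa [hb] at h3
  have hc : ∀ t ∈ Set.Icc (0 : ℝ) T, u (t, γ t) = u (0, γ 0) :=
    constant_of_has_deriv_right_zero
      (fun t ht => (hw t ht).continuousAt.continuousWithinAt)
      (fun t ht => (hw t ⟨ht.1, ht.2.le⟩).hasDerivWithinAt)
  have hg : ∀ t ∈ Set.Icc (0 : ℝ) T,
      HasDerivAt (fun s => γ s - s • u (0, γ 0)) 0 t := by
    intro t ht
    have h := (hγ t ht).sub ((hasDerivAt_id t).smul_const (u (0, γ 0)))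
    rw [hc t ht, one_smul, sub_self] at h
    exact h
  intro t ht
  have h := constant_of_has_deriv_right_zero
      (fun t ht => (hg t ht).continuousAt.continuousWithinAt)
      (fun t ht => (hg t ⟨ht.1, ht.2.le⟩).hasDerivWithinAt) t ht
  simp only [zero_smul, sub_zero] at h
  exact sub_eq_iff_eq_add.mp h
end

section
/- Let v : ℝⁿ → ℝⁿ be C¹ with ‖Dv(x)‖ ≤ λ (operator norm) for all x, where λ > 0, so that for each t ∈ [0, 1/λ) the map Φₜ(x) = x + t·v(x) is a bijection of ℝⁿ. Define u : [0, 1/λ) × ℝⁿ → ℝⁿ by u(t, y) = v(Φₜ⁻¹(y)). Then u is differentiable on (0, 1/λ) × ℝⁿ, u(0,·) = v, and u satisfies the inviscid Burgers equation ∂ₜu(t,y) + (Dₓu(t,y))(u(t,y)) = 0 for all t ∈ (0, 1/λ) and y ∈ ℝⁿ. -/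
/-- the explicit smooth Burgers solution before shock formation, obtained by
transporting the initial velocity `v` along straight characteristics: `u(t,y) = v(Φₜ⁻¹(y))`
is differentiable on `(0,1/λ) × ℝⁿ`, satisfies `u(0,·) = v`, and solves the inviscid
Burgers equation there. -/
theorem burgers_solution_via_characteristics
    (n : ℕ) (v : EuclideanSpace ℝ (Fin n) → EuclideanSpace ℝ (Fin n))
    (hv : ContDiff ℝ 1 v)
    (lam : ℝ) (hlam : 0 < lam)
    (hbound : ∀ x : EuclideanSpace ℝ (Fin n), ‖fderiv ℝ v x‖ ≤ lam)
    (u : ℝ × EuclideanSpace ℝ (Fin n) → EuclideanSpace ℝ (Fin n))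
    (hu : u = fun p =>
      v (Function.invFun (fun x : EuclideanSpace ℝ (Fin n) => x + p.1 • v x) p.2)) :
    (∀ t ∈ Set.Ico (0 : ℝ) (1 / lam),
      Function.Bijective (fun x : EuclideanSpace ℝ (Fin n) => x + t • v x)) ∧
    (∀ y : EuclideanSpace ℝ (Fin n), u (0, y) = v y) ∧
    (∀ t ∈ Set.Ioo (0 : ℝ) (1 / lam), ∀ y : EuclideanSpace ℝ (Fin n),
      DifferentiableAt ℝ u (t, y)) ∧
    (∀ t ∈ Set.Ioo (0 : ℝ) (1 / lam), ∀ y : EuclideanSpace ℝ (Fin n),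
      deriv (fun s => u (s, y)) t + (fderiv ℝ (fun z => u (t, z)) y) (u (t, y)) = 0) := by
  have hlip : ∀ x y, ‖v x - v y‖ ≤ lam * ‖x - y‖ := fun x y =>
    Convex.norm_image_sub_le_of_norm_fderiv_le (𝕜 := ℝ) (s := Set.univ)
      (fun z _ => (hv.differentiable one_ne_zero) z) (fun z _ => hbound z) convex_univ
      (Set.mem_univ y) (Set.mem_univ x)
  have hbij : ∀ t ∈ Set.Ico (0 : ℝ) (1 / lam),
      Function.Bijective (fun x : EuclideanSpace ℝ (Fin n) => x + t • v x) := by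
    rintro t ⟨ht0, ht1⟩
    have htl : t * lam < 1 := by rwa [lt_div_iff₀ hlam] at ht1
    constructor
    · intro x y hxy
      have h1 : x - y = t • (v y - v x) := by
        have : x + t • v x = y + t • v y := hxy
        rw [smul_sub, sub_eq_sub_iff_add_eq_add, this, add_comm]
      have h2 : ‖x - y‖ ≤ (t * lam) * ‖x - y‖ := by
        calc ‖x - y‖ = t * ‖v y - v x‖ := by
              conv_lhs => rw [h1, norm_smul, Real.norm_of_nonneg ht0]
          _ ≤ t * (lam * ‖y - x‖) := by gcongr; exact hlip y x
          _ = _ := by rw [norm_sub_rev]; ring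
      have h3 : ‖x - y‖ = 0 := by nlinarith [norm_nonneg (x - y)]
      exact sub_eq_zero.1 (norm_eq_zero.1 h3)
    · intro y
      have hc : ContractingWith (Real.toNNReal (t * lam)) (fun x => y - t • v x) := by
        refine ⟨by simpa using htl, LipschitzWith.of_dist_le_mul fun a b => ?_⟩
        rw [Real.coe_toNNReal _ (by positivity), dist_eq_norm, dist_eq_norm]
        calc ‖y - t • v a - (y - t • v b)‖ = ‖t • (v b - v a)‖ := by
              congr 1; rw [smul_sub]; abel
          _ = t * ‖v b - v a‖ := by rw [norm_smul, Real.norm_of_nonneg ht0]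
          _ ≤ t * (lam * ‖b - a‖) := by gcongr; exact hlip b a
          _ = _ := by rw [norm_sub_rev]; ring
      refine ⟨ContractingWith.fixedPoint _ hc, ?_⟩
      have := hc.fixedPoint_isFixedPt
      have h : y - t • v (ContractingWith.fixedPoint _ hc) = ContractingWith.fixedPoint _ hc := this
      exact (sub_eq_iff_eq_add.1 h).symm
  have hinv : ∀ t ∈ Set.Ico (0 : ℝ) (1 / lam), ∀ x, u (t, x + t • v x) = v x := by
    intro t ht x
    rw [hu]
    exact congrArg v (Function.leftInverse_invFun (hbij t ht).1 x)
  have hdiff : ∀ t ∈ Set.Ioo (0 : ℝ) (1 / lam), ∀ y : EuclideanSpace ℝ (Fin n),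
      DifferentiableAt ℝ u (t, y) := by
    intro t ht y
    obtain ⟨x, rfl⟩ := (hbij t ⟨ht.1.le, ht.2⟩).2 y
    have htl : t * lam < 1 := by have := ht.2; rwa [lt_div_iff₀ hlam] at this
    let F : ℝ × EuclideanSpace ℝ (Fin n) → ℝ × EuclideanSpace ℝ (Fin n) :=
      fun p => (p.1, p.2 + p.1 • v p.2)
    have hF : ContDiff ℝ 1 F := by
      have : ContDiff ℝ 1 (fun p : ℝ × EuclideanSpace ℝ (Fin n) => v p.2) := hv.comp contDiff_snd
      exact contDiff_fst.prodMk (contDiff_snd.add (contDiff_fst.smul this))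
    let D := fderiv ℝ F (t, x)
    have hS : HasStrictFDerivAt F D (t, x) := hF.contDiffAt.hasStrictFDerivAt one_ne_zero
    have hD : ∀ q, D q = (q.1, q.2 + (t • fderiv ℝ v x q.2 + q.1 • v x)) := by
      intro q
      have hvx : HasFDerivAt v (fderiv ℝ v x) ((t, x) : ℝ × EuclideanSpace ℝ (Fin n)).2 :=
        ((hv.differentiable one_ne_zero) x).hasFDerivAt
      have h1 := hvx.comp (t, x) (hasFDerivAt_snd (𝕜 := ℝ))
      have h2 := (hasFDerivAt_fst (𝕜 := ℝ) (p := ((t, x) : ℝ × EuclideanSpace ℝ (Fin n)))).prodMk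
        ((hasFDerivAt_snd (𝕜 := ℝ)).add ((hasFDerivAt_fst (𝕜 := ℝ)).smul h1))
      have h3 : D = _ := HasFDerivAt.fderiv h2
      rw [h3]
      simp
    have hDi : Function.Injective D.toLinearMap := by
      rw [injective_iff_map_eq_zero]
      rintro ⟨a, z⟩ hq
      have hq' : D (a, z) = 0 := hq
      rw [hD] at hq'
      obtain ⟨ha, hz⟩ := Prod.mk_eq_zero.1 hq'
      dsimp only at ha hz
      subst ha
      rw [zero_smul, add_zero] at hz
      have h2 : ‖z‖ ≤ (t * lam) * ‖z‖ := by
        calc ‖z‖ = t * ‖fderiv ℝ v x z‖ := by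
              conv_lhs => rw [eq_neg_of_add_eq_zero_left hz, norm_neg, norm_smul,
                Real.norm_of_nonneg ht.1.le]
          _ ≤ t * (lam * ‖z‖) := by
              have := ht.1.le
              gcongr
              exact (fderiv ℝ v x).le_of_opNorm_le (hbound x) z
          _ = _ := by ring
      have h3 : ‖z‖ = 0 := by nlinarith [norm_nonneg z]
      rw [norm_eq_zero.1 h3]; rfl
    let e : (ℝ × EuclideanSpace ℝ (Fin n)) ≃L[ℝ] (ℝ × EuclideanSpace ℝ (Fin n)) :=
      (LinearEquiv.ofInjectiveEndo _ hDi).toContinuousLinearEquiv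
    have he : (e : (ℝ × EuclideanSpace ℝ (Fin n)) →L[ℝ] _) = D := by
      ext q <;> rfl
    rw [← he] at hS
    have hL := hS.to_localInverse.hasFDerivAt.differentiableAt
    have hR := hS.eventually_right_inverse
    have hnear : ∀ᶠ q in nhds (F (t, x)), q.1 ∈ Set.Ioo (0 : ℝ) (1 / lam) :=
      continuous_fst.continuousAt.eventually (isOpen_Ioo.mem_nhds ht)
    have hvd := (hv.differentiable one_ne_zero)
    have hcomp : DifferentiableAt ℝ (fun q => v (hS.localInverse F e (t, x) q).2) (F (t, x)) :=
      DifferentiableAt.comp (F (t, x)) (hvd _) hL.snd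
    refine hcomp.congr_of_eventuallyEq ?_
    filter_upwards [hR, hnear] with q hq hq1
    generalize hS.localInverse F e (t, x) q = p at hq
    subst hq
    exact hinv p.1 ⟨hq1.1.le, hq1.2⟩ p.2
  refine ⟨hbij, ?_, hdiff, ?_⟩
  · intro y
    have := hinv 0 ⟨le_rfl, by positivity⟩ y
    simpa using this
  · intro t ht y
    have hd := (hdiff t ht y).hasFDerivAt
    have ht' : t ∈ Set.Ico (0 : ℝ) (1 / lam) := ⟨ht.1.le, ht.2⟩
    obtain ⟨x, rfl⟩ := (hbij t ht').2 y
    dsimp only at hd ⊢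
    set D := fderiv ℝ u (t, x + t • v x) with hDdef
    have h1 : HasDerivAt (fun s => u (s, x + t • v x)) (D (1, 0)) t :=
      HasFDerivAt.comp_hasDerivAt (f := fun s : ℝ => (s, x + t • v x)) t hd
        ((hasDerivAt_id t).prodMk (hasDerivAt_const t _))
    have h2 : HasFDerivAt (fun z => u (t, z)) (D.comp (ContinuousLinearMap.inr ℝ ℝ _))
        (x + t • v x) :=
      HasFDerivAt.comp (f := fun z => (t, z)) (x + t • v x) hd (hasFDerivAt_prodMk_right t _)
    have h3 : HasDerivAt (fun s => u (s, x + s • v x)) (D (1, v x)) t := by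
      refine HasFDerivAt.comp_hasDerivAt (f := fun s : ℝ => (s, x + s • v x)) t hd
        ((hasDerivAt_id t).prodMk ?_)
      simpa using ((hasDerivAt_id t).smul_const (v x)).const_add x
    have h4 : HasDerivAt (fun s => u (s, x + s • v x)) 0 t := by
      refine (hasDerivAt_const t (v x)).congr_of_eventuallyEq ?_
      filter_upwards [isOpen_Ioo.mem_nhds ht] with s hs
      exact hinv s ⟨hs.1.le, hs.2⟩ x
    rw [h1.deriv, h2.fderiv, hinv t ht' x, ContinuousLinearMap.comp_apply,
      ContinuousLinearMap.inr_apply, ← map_add]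
    simpa using h3.unique h4
end

section
/- Let φ : ℝⁿ → ℝ be C², let t₀ > 0, and suppose the Hessian satisfies D²φ(x)(w,w) ≥ −‖w‖²/t₀ for all x, w ∈ ℝⁿ. Then for every t with 0 ≤ t < t₀ and all x, y ∈ ℝⁿ one has ⟨(x + t·∇φ(x)) − (y + t·∇φ(y)), x − y⟩ ≥ (1 − t/t₀)·‖x − y‖²; in particular the map Φₜ(x) = x + t·∇φ(x) is injective for all 0 ≤ t < t₀. -/
/-- quantitative flat-space mechanism behind Theorems 2 and 4: if the Hessian
of `φ` is bounded below by `-1/t₀` then for `0 ≤ t < t₀` the map `Φₜ(x) = x + t·∇φ(x)`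
satisfies a strong monotonicity inequality, and in particular is injective. -/
theorem injectivity_before_shock_time
    (n : ℕ) (φ : EuclideanSpace ℝ (Fin n) → ℝ)
    (hφ : ContDiff ℝ 2 φ)
    (t₀ : ℝ) (ht₀ : 0 < t₀)
    (hhess : ∀ x w : EuclideanSpace ℝ (Fin n),
      -(‖w‖ ^ 2 / t₀) ≤ iteratedFDeriv ℝ 2 φ x ![w, w]) :
    ∀ t : ℝ, 0 ≤ t → t < t₀ →
      (∀ x y : EuclideanSpace ℝ (Fin n),
        (1 - t / t₀) * ‖x - y‖ ^ 2 ≤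
          (inner ℝ ((x + t • gradient φ x) - (y + t • gradient φ y)) (x - y) : ℝ)) ∧
      Function.Injective
        (fun x : EuclideanSpace ℝ (Fin n) => x + t • gradient φ x) := by
  have key : ∀ x y : EuclideanSpace ℝ (Fin n),
      -(‖x - y‖ ^ 2 / t₀) ≤ (inner ℝ (gradient φ x - gradient φ y) (x - y) : ℝ) := by
    intro x y
    set w := x - y with hw
    have hd : Differentiable ℝ (fderiv ℝ φ) :=
      (hφ.fderiv_right (m := 1) (by norm_num)).differentiable (by norm_num)
    have hg : ∀ s : ℝ, HasDerivAt (fun s : ℝ => fderiv ℝ φ (y + s • w) w)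
        (fderiv ℝ (fderiv ℝ φ) (y + s • w) w w) s := by
      intro s
      have h1 : HasDerivAt (fun s : ℝ => y + s • w) w s := by
        simpa using ((hasDerivAt_id s).smul_const w).const_add y
      have h2 := (hd (y + s • w)).hasFDerivAt.comp_hasDerivAt s h1
      simpa using h2.clm_apply (hasDerivAt_const s w)
    obtain ⟨c, -, hc⟩ := exists_hasDerivAt_eq_slope
      (fun s : ℝ => fderiv ℝ φ (y + s • w) w) _ (zero_lt_one)
      (fun s _ => (hg s).continuousAt.continuousWithinAt) (fun s _ => hg s)
    have h3 := hhess (y + c • w) w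
    rw [iteratedFDeriv_two_apply] at h3
    simp only [Matrix.cons_val_zero, Matrix.cons_val_one] at h3
    rw [hc] at h3
    have hx : y + (1 : ℝ) • w = x := by simp [hw]
    rw [hx] at h3
    rw [inner_sub_left]
    simpa [gradient, InnerProductSpace.toDual_symm_apply] using h3
  intro t ht htt
  have main : ∀ x y : EuclideanSpace ℝ (Fin n),
        (1 - t / t₀) * ‖x - y‖ ^ 2 ≤
          (inner ℝ ((x + t • gradient φ x) - (y + t • gradient φ y)) (x - y) : ℝ) := by
    intro x y
    have h := mul_le_mul_of_nonneg_left (key x y) ht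
    have e : (x + t • gradient φ x) - (y + t • gradient φ y)
        = (x - y) + t • (gradient φ x - gradient φ y) := by
      rw [smul_sub]; abel
    rw [e, inner_add_left, real_inner_smul_left, real_inner_self_eq_norm_sq]
    have e2 : (1 - t / t₀) * ‖x - y‖ ^ 2 = ‖x - y‖ ^ 2 + t * -(‖x - y‖ ^ 2 / t₀) := by ring
    rw [e2]
    linarith
  refine ⟨main, fun x y hxy => ?_⟩
  have h := main x y
  simp only at hxy
  rw [hxy, sub_self, inner_zero_left] at h
  have hpos : 0 < 1 - t / t₀ := by
    have := (div_lt_one ht₀).2 htt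
    linarith
  have h0 : ‖x - y‖ ^ 2 ≤ 0 := by
    by_contra hcon
    push Not at hcon
    have := mul_pos hpos hcon
    linarith
  have h1 : ‖x - y‖ = 0 := by
    have := sq_nonneg ‖x - y‖
    exact pow_eq_zero_iff (two_ne_zero) |>.1 (le_antisymm h0 this)
  exact sub_eq_zero.1 (norm_eq_zero.1 h1)
end

section
/- Let X : ℝ² → ℝ² be a differentiable vector field with tr(DX(x)) = 0 for all x (i.e., X is divergence-free). Suppose x₀ ∈ ℝ² is a critical point of the function x ↦ ‖X(x)‖² (its Fréchet derivative vanishes at x₀, e.g., x₀ is a local maximum) and X(x₀) ≠ 0. Then det(DX(x₀)) = 0, and consequently (DX(x₀)) ∘ (DX(x₀)) = 0; in particular tr((DX(x₀))²) = 0. -/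
theorem aux_sq_zero (L : EuclideanSpace ℝ (Fin 2) →ₗ[ℝ] EuclideanSpace ℝ (Fin 2))
    (ht : LinearMap.trace ℝ (EuclideanSpace ℝ (Fin 2)) L = 0) (hd : LinearMap.det L = 0) :
    L ∘ₗ L = 0 := by
  let b := (EuclideanSpace.basisFun (Fin 2) ℝ).toBasis
  rw [LinearMap.trace_eq_matrix_trace ℝ b, Matrix.trace_fin_two] at ht
  rw [← LinearMap.det_toMatrix b, Matrix.det_fin_two] at hd
  apply (LinearMap.toMatrix b b).injective
  rw [LinearMap.toMatrix_comp b b b, map_zero]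
  generalize LinearMap.toMatrix b b L = M at *
  have h : M 1 1 = - M 0 0 := by linarith
  rw [h] at hd
  ext i j
  fin_cases i <;> fin_cases j <;> simp [Matrix.mul_apply, Fin.sum_univ_two, h] <;> linarith

/-- the key pointwise lemma in the proof of the non-existence of asymptotic
directions (last section of the paper): for a divergence-free field `X` on ℝ², at a
critical point of `‖X‖²` where `X` does not vanish, the Jacobi matrix `DX` is degenerate,
and consequently `(DX)² = 0`, in particular `tr((DX)²) = 0`. -/
theorem divergence_free_critical_point_degenerate
    (X : EuclideanSpace ℝ (Fin 2) → EuclideanSpace ℝ (Fin 2))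
    (hX : Differentiable ℝ X)
    (hdiv : ∀ x, LinearMap.trace ℝ (EuclideanSpace ℝ (Fin 2))
      (fderiv ℝ X x : EuclideanSpace ℝ (Fin 2) →ₗ[ℝ] EuclideanSpace ℝ (Fin 2)) = 0)
    (x₀ : EuclideanSpace ℝ (Fin 2))
    (hcrit : fderiv ℝ (fun x => ‖X x‖ ^ 2) x₀ = 0)
    (hX0 : X x₀ ≠ 0) :
    LinearMap.det
      (fderiv ℝ X x₀ : EuclideanSpace ℝ (Fin 2) →ₗ[ℝ] EuclideanSpace ℝ (Fin 2)) = 0 ∧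
    (fderiv ℝ X x₀).comp (fderiv ℝ X x₀) = 0 ∧
    LinearMap.trace ℝ (EuclideanSpace ℝ (Fin 2))
      (((fderiv ℝ X x₀).comp (fderiv ℝ X x₀)) :
        EuclideanSpace ℝ (Fin 2) →ₗ[ℝ] EuclideanSpace ℝ (Fin 2)) = 0 := by
  have hin : ∀ v, inner ℝ (X x₀) (fderiv ℝ X x₀ v) = 0 := by
    intro v
    have h1 := ((hX x₀).hasFDerivAt.norm_sq).fderiv
    rw [hcrit] at h1
    have h2 := congrArg (fun f => f v) h1
    simpa using h2.symm
  have hd : LinearMap.det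
      (fderiv ℝ X x₀ : EuclideanSpace ℝ (Fin 2) →ₗ[ℝ] EuclideanSpace ℝ (Fin 2)) = 0 := by
    by_contra hne
    have hs := ((LinearMap.isUnit_iff_isUnit_det _).2 (isUnit_iff_ne_zero.2 hne))
    obtain ⟨v, hv⟩ := ((Module.End.isUnit_iff _).1 hs).2 (X x₀)
    have h := hin v
    rw [ContinuousLinearMap.coe_coe] at hv
    rw [hv] at h
    exact hX0 (inner_self_eq_zero.1 h)
  have hsq := aux_sq_zero _ (hdiv x₀) hd
  have hc : (fderiv ℝ X x₀).comp (fderiv ℝ X x₀) = 0 := by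
    ext1 v
    exact LinearMap.congr_fun hsq v
  refine ⟨hd, hc, ?_⟩
  rw [hc]
  simp
end
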